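/- Suppose n ≥ 3, the feasible allocation x satisfies the Nashian Greedy condition, and the valuations have unit monopolist utilities. Let p ≠ 0 with |p| ≤ 1/log n, and let x* be any feasible allocation with U*_a = ∫_0^T v a s · x*_a s ds > 0 for every agent a. Then ((1/n) ∑_a (U a T)^p)^{1/p} ≥ ((1/n) ∑_a (U*_a)^p)^{1/p} / (2 e^2 · log(n+1)). -/

import Mathlib

open MeasureTheory Real

/-!
Greediness makes the rate `∑ a, x a s * v a s / U a s` at least `v b s / U b s` for every agent `b`,
hence at least `∑ a, y a s * v a s / U a s` for every feasible `y`. The former is the derivative of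
`∑ a, log (U a s)`, and each `U a` grows from `c` to at most `c + 1`; as `U a` is nondecreasing, the
ratios of the utilities under `y` to the final base utilities have arithmetic mean at most
`log (1 / c + 1)`.

For `p ≤ 1` the quotient of the `p`-means of these two utility profiles is a `p`-mean of the ratios,
with weights proportional to `(U a T) ^ p`, and so at most the arithmetic mean with the same
weights. The weights are uniform up to the factor `(1 / c + 1) ^ |p|`, which for `c = 1 / n` and
`|p| ≤ 1 / log n` is at most `exp 2`.
-/

section PowerMean

variable {ι : Type*}

theorem rpow_mean_le_arith_mean (s : Finset ι) (w z : ι → ℝ) (hw : ∀ i ∈ s, 0 ≤ w i)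
    (hw' : ∑ i ∈ s, w i = 1) (hz : ∀ i ∈ s, 0 < z i) {p : ℝ} (hp0 : p ≠ 0) (hp1 : p ≤ 1) :
    (∑ i ∈ s, w i * z i ^ p) ^ (1 / p) ≤ ∑ i ∈ s, w i * z i := by
  have hz' : ∀ i ∈ s, 0 ≤ z i := fun i hi => (hz i hi).le
  have hzp : ∀ i ∈ s, 0 ≤ z i ^ p := fun i hi => rpow_nonneg (hz' i hi) p
  rcases hp0.lt_or_gt with hneg | hpos
  · -- both sides are compared with the geometric mean
    have hgeom_pos : 0 < ∏ i ∈ s, z i ^ w i :=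
      Finset.prod_pos fun i hi => rpow_pos_of_pos (hz i hi) _
    have hgeom_rpow_le : (∏ i ∈ s, z i ^ w i) ^ p ≤ ∑ i ∈ s, w i * z i ^ p := by
      calc (∏ i ∈ s, z i ^ w i) ^ p = ∏ i ∈ s, (z i ^ p) ^ w i := by
            rw [← finsetProd_rpow s _ fun i hi => rpow_nonneg (hz' i hi) _]
            refine Finset.prod_congr rfl fun i hi => ?_
            rw [← rpow_mul (hz' i hi), ← rpow_mul (hz' i hi), mul_comm]
        _ ≤ ∑ i ∈ s, w i * z i ^ p := geom_mean_le_arith_mean_weighted s w _ hw hw' hzp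
    calc (∑ i ∈ s, w i * z i ^ p) ^ (1 / p) ≤ ∏ i ∈ s, z i ^ w i := by
          rw [one_div, rpow_inv_le_iff_of_neg ((rpow_pos_of_pos hgeom_pos p).trans_le hgeom_rpow_le)
            hgeom_pos hneg]
          exact hgeom_rpow_le
      _ ≤ ∑ i ∈ s, w i * z i := geom_mean_le_arith_mean_weighted s w z hw hw' hz'
  · calc (∑ i ∈ s, w i * z i ^ p) ^ (1 / p) ≤ ∑ i ∈ s, w i * (z i ^ p) ^ (1 / p) := by
          exact rpow_arith_mean_le_arith_mean_rpow s w _ hw hw' hzp ((one_le_div hpos).2 hp1)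
      _ = ∑ i ∈ s, w i * z i := Finset.sum_congr rfl fun i hi => by
          rw [one_div, rpow_rpow_inv (hz' i hi) hp0]

theorem rpow_le_rpow_abs_mul_rpow {r y z : ℝ} (p : ℝ) (hy : 0 < y) (hz : 0 < z)
    (hyz : y ≤ r * z) (hzy : z ≤ r * y) : y ^ p ≤ r ^ |p| * z ^ p := by
  have hr : 0 < r := pos_of_mul_pos_left (hy.trans_le hyz) hz.le
  rcases le_total 0 p with hp | hp
  · rw [abs_of_nonneg hp, ← mul_rpow hr.le hz.le]
    exact rpow_le_rpow hy.le hyz hp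
  · rw [abs_of_nonpos hp, rpow_neg hr.le, ← div_eq_inv_mul, le_div_iff₀' (rpow_pos_of_pos hr p),
      ← mul_rpow hr.le hy.le]
    exact rpow_le_rpow_of_nonpos hz hzy hp

variable [Fintype ι] {p K : ℝ} {s u : ι → ℝ}

/-- The unweighted `p`-mean of a finite family of positive reals, for `p ≠ 0`. -/
noncomputable def powerMean (p : ℝ) (u : ι → ℝ) : ℝ :=
  (1 / (Fintype.card ι : ℝ) * ∑ a, u a ^ p) ^ (1 / p)

theorem powerMean_nonneg (hu : ∀ a, 0 ≤ u a) : 0 ≤ powerMean p u :=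
  rpow_nonneg (mul_nonneg (by positivity) (Finset.sum_nonneg fun a _ => rpow_nonneg (hu a) p)) _

variable [Nonempty ι]

theorem powerMean_eq_weighted_rpow_mean_mul_powerMean (hs : ∀ a, 0 ≤ s a) (hu : ∀ a, 0 < u a) :
    powerMean p s =
      (∑ a, u a ^ p / (∑ b, u b ^ p) * (s a / u a) ^ p) ^ (1 / p) * powerMean p u := by
  have hup : ∀ a, 0 < u a ^ p := fun a => rpow_pos_of_pos (hu a) p
  have hsum : 0 < ∑ b, u b ^ p := Finset.sum_pos (fun a _ => hup a) Finset.univ_nonempty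
  have hterm : ∀ a, u a ^ p / (∑ b, u b ^ p) * (s a / u a) ^ p = s a ^ p / ∑ b, u b ^ p := by
    intro a
    rw [div_rpow (hs a) (hu a).le, div_mul_div_comm, mul_comm (∑ b, u b ^ p),
      mul_div_mul_left _ _ (hup a).ne']
  have hsp : 0 ≤ ∑ a, s a ^ p := Finset.sum_nonneg fun a _ => rpow_nonneg (hs a) p
  simp_rw [powerMean, hterm]
  rw [← Finset.sum_div, ← mul_rpow (by positivity) (by positivity)]
  congr 1
  field_simp

theorem div_sum_le_div_card {w : ι → ℝ} (hw : ∀ a, 0 < w a) (hwK : ∀ a b, w a ≤ K * w b) (a : ι) :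
    w a / ∑ b, w b ≤ K / Fintype.card ι := by
  rw [div_le_div_iff₀ (Finset.sum_pos (fun b _ => hw b) Finset.univ_nonempty) (by positivity),
    mul_comm, ← nsmul_eq_mul, Finset.mul_sum]
  exact Finset.card_nsmul_le_sum _ _ _ fun b _ => hwK a b

theorem powerMean_le_mul_powerMean (hp0 : p ≠ 0) (hp1 : p ≤ 1) (hs : ∀ a, 0 < s a)
    (hu : ∀ a, 0 < u a) (hK : ∀ a b, u a ^ p ≤ K * u b ^ p) :
    powerMean p s ≤ K * (1 / (Fintype.card ι : ℝ) * ∑ a, s a / u a) * powerMean p u := by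
  have hup : ∀ a, 0 < u a ^ p := fun a => rpow_pos_of_pos (hu a) p
  have hsum : 0 < ∑ b, u b ^ p := Finset.sum_pos (fun a _ => hup a) Finset.univ_nonempty
  have hratio : ∀ a, 0 < s a / u a := fun a => div_pos (hs a) (hu a)
  rw [powerMean_eq_weighted_rpow_mean_mul_powerMean (fun a => (hs a).le) hu]
  refine mul_le_mul_of_nonneg_right ?_ (powerMean_nonneg fun a => (hu a).le)
  calc (∑ a, u a ^ p / (∑ b, u b ^ p) * (s a / u a) ^ p) ^ (1 / p)
      ≤ ∑ a, u a ^ p / (∑ b, u b ^ p) * (s a / u a) :=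
        rpow_mean_le_arith_mean _ _ _ (fun a _ => (div_pos (hup a) hsum).le)
          (by rw [← Finset.sum_div, div_self hsum.ne']) (fun a _ => hratio a) hp0 hp1
    _ ≤ ∑ a, K / Fintype.card ι * (s a / u a) := Finset.sum_le_sum fun a _ =>
        mul_le_mul_of_nonneg_right (div_sum_le_div_card hup hK a) (hratio a).le
    _ = K * (1 / (Fintype.card ι : ℝ) * ∑ a, s a / u a) := by rw [← Finset.mul_sum]; ring

end PowerMean

section Primitive

variable {a b c : ℝ} {f : ℝ → ℝ}

theorem monotoneOn_const_add_primitive (c : ℝ) (hf : IntervalIntegrable f volume a b)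
    (hf_nonneg : ∀ᵐ s ∂volume.restrict (Set.Icc a b), 0 ≤ f s) :
    MonotoneOn (fun t => c + ∫ s in a..t, f s) (Set.Icc a b) := by
  intro t ht u hu htu
  have hau : Set.Icc a u ⊆ Set.Icc a b := Set.Icc_subset_Icc_right hu.2
  refine (add_le_add_iff_left c).2 (intervalIntegral.integral_mono_interval le_rfl ht.1 htu ?_ ?_)
  · exact ae_restrict_of_ae_restrict_of_subset (Set.Ioc_subset_Icc_self.trans hau) hf_nonneg
  · refine hf.mono_set ?_
    rwa [Set.uIcc_of_le hu.1, Set.uIcc_of_le (hu.1.trans hu.2)]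

theorem le_const_add_primitive (c : ℝ) (hf_nonneg : ∀ᵐ s ∂volume.restrict (Set.Icc a b), 0 ≤ f s)
    {t : ℝ} (ht : t ∈ Set.Icc a b) : c ≤ c + ∫ s in a..t, f s :=
  le_add_of_nonneg_right <| intervalIntegral.integral_nonneg_of_ae_restrict ht.1 <|
    ae_restrict_of_ae_restrict_of_subset (Set.Icc_subset_Icc_right ht.2) hf_nonneg

theorem intervalIntegrable_div_const_add_primitive (hab : a ≤ b) (hc : 0 < c)
    (hf : IntervalIntegrable f volume a b)
    (hf_nonneg : ∀ᵐ s ∂volume.restrict (Set.Icc a b), 0 ≤ f s) :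
    IntervalIntegrable (fun t => f t / (c + ∫ s in a..t, f s)) volume a b := by
  refine hf.mul_continuousOn (ContinuousOn.inv₀ ?_ fun t ht => ?_)
  · exact continuousOn_const.add
      (intervalIntegral.continuousOn_primitive_interval' hf Set.left_mem_uIcc)
  · rw [Set.uIcc_of_le hab] at ht
    exact (hc.trans_le (le_const_add_primitive c hf_nonneg ht)).ne'

-- The integral of the derivative of a monotone function is at most its increment, so `≤` does not
-- need the absolute continuity of the logarithm of the primitive.
theorem integral_div_const_add_primitive_le_log (hab : a ≤ b) (hc : 0 < c)
    (hf : IntervalIntegrable f volume a b)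
    (hf_nonneg : ∀ᵐ s ∂volume.restrict (Set.Icc a b), 0 ≤ f s) :
    ∫ t in a..b, f t / (c + ∫ s in a..t, f s) ≤ Real.log ((c + ∫ s in a..b, f s) / c) := by
  let g : ℝ → ℝ := fun t => c + ∫ s in a..t, f s
  have hgpos : ∀ t ∈ Set.Icc a b, 0 < g t := fun t ht =>
    hc.trans_le (le_const_add_primitive c hf_nonneg ht)
  have hmono : MonotoneOn (fun t => Real.log (g t)) (Set.uIcc a b) := by
    rw [Set.uIcc_of_le hab]
    exact fun t ht u hu htu =>
      Real.log_le_log (hgpos t ht) (monotoneOn_const_add_primitive c hf hf_nonneg ht hu htu)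
  have hderiv : ∀ᵐ t, t ∈ Set.uIoc a b → deriv (fun t => Real.log (g t)) t = f t / g t := by
    filter_upwards [hf.ae_hasDerivAt_integral] with t ht htab
    have htab' : t ∈ Set.uIcc a b := Set.uIoc_subset_uIcc htab
    have hg : HasDerivAt g (f t) t := (ht htab' a Set.left_mem_uIcc).const_add c
    rw [Set.uIcc_of_le hab] at htab'
    exact (hg.log (hgpos t htab').ne').deriv
  have hga : g a = c := by simp [g]
  have hincr : 0 ≤ Real.log (g b) - Real.log (g a) :=
    sub_nonneg.2 (hmono Set.left_mem_uIcc Set.right_mem_uIcc hab)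
  have hint := hmono.intervalIntegral_deriv_mem_uIcc
  rw [Set.uIcc_of_le hincr, intervalIntegral.integral_congr_ae hderiv, hga,
    ← Real.log_div (hgpos b (Set.right_mem_Icc.2 hab)).ne' hc.ne'] at hint
  exact hint.2

end Primitive

section Allocation

variable {ι : Type*} [Fintype ι]

theorem sum_mul_le_sum_mul_of_support_subset_argmax {q x y : ι → ℝ} (hq : ∀ a, 0 ≤ q a)
    (hx : ∀ a, 0 ≤ x a) (hx1 : ∑ a, x a = 1) (hy : ∀ a, 0 ≤ y a) (hy1 : ∑ a, y a ≤ 1)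
    (hmax : ∀ a b, 0 < x a → q b ≤ q a) : ∑ a, q a * y a ≤ ∑ a, q a * x a := by
  obtain ⟨m, -, hm⟩ : ∃ m ∈ Finset.univ, 0 < x m :=
    Finset.exists_lt_of_sum_lt (by simp [hx1])
  calc ∑ a, q a * y a ≤ ∑ a, q m * y a :=
        Finset.sum_le_sum fun a _ => mul_le_mul_of_nonneg_right (hmax m a hm) (hy a)
    _ = q m * ∑ a, y a := (Finset.mul_sum ..).symm
    _ ≤ q m * ∑ a, x a := mul_le_mul_of_nonneg_left (hy1.trans_eq hx1.symm) (hq m)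
    _ = ∑ a, q m * x a := Finset.mul_sum ..
    _ ≤ ∑ a, q a * x a := Finset.sum_le_sum fun a _ => by
        rcases (hx a).eq_or_lt with hxa | hxa
        · simp [← hxa]
        · exact mul_le_mul_of_nonneg_right (hmax a m hxa) (hx a)

/-- A feasible allocation of one unit of a divisible good per unit of time in `[0, T]`:
`x a s` is the share received by agent `a` at time `s`. -/
structure IsFeasibleAllocation (T : ℝ) (x : ι → ℝ → ℝ) : Prop where
  measurable : ∀ a, Measurable (x a)
  ae_shares : ∀ᵐ s ∂volume.restrict (Set.Icc 0 T), (∀ a, 0 ≤ x a s) ∧ ∑ a, x a s ≤ 1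

/-- The base-`c` utility of agent `a` at time `t` under the allocation `x`: the value accrued
since time `0` on top of an endowment `c`. -/
noncomputable def baseUtility (c : ℝ) (v x : ι → ℝ → ℝ) (a : ι) (t : ℝ) : ℝ :=
  c + ∫ s in (0 : ℝ)..t, v a s * x a s

/-- The Nashian Greedy condition: the whole good is allocated, and only to agents maximizing the
ratio of current value to current base-`c` utility. The ratios are compared by
cross-multiplication. -/
def IsNashianGreedy (T c : ℝ) (v x : ι → ℝ → ℝ) : Prop :=
  ∀ᵐ s ∂volume.restrict (Set.Icc 0 T), (∑ a, x a s = 1) ∧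
    ∀ a b, 0 < x a s → v a s * baseUtility c v x b s ≥ v b s * baseUtility c v x a s

variable {T c : ℝ} {v x y : ι → ℝ → ℝ} {a : ι}

namespace IsFeasibleAllocation

theorem ae_mem_Icc (hx : IsFeasibleAllocation T x) (a : ι) :
    ∀ᵐ s ∂volume.restrict (Set.Icc 0 T), x a s ∈ Set.Icc 0 1 := by
  filter_upwards [hx.ae_shares] with s ⟨hnonneg, hsum⟩
  exact ⟨hnonneg a, (Finset.single_le_sum (fun b _ => hnonneg b) (Finset.mem_univ a)).trans hsum⟩

theorem intervalIntegrable_mul (hx : IsFeasibleAllocation T x) (hT : 0 ≤ T)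
    (hv_int : IntegrableOn (v a) (Set.Icc 0 T)) :
    IntervalIntegrable (fun s => v a s * x a s) volume 0 T := by
  rw [intervalIntegrable_iff_integrableOn_Icc_of_le hT]
  refine hv_int.mul_bdd (hx.measurable a).aestronglyMeasurable (c := 1) ?_
  filter_upwards [hx.ae_mem_Icc a] with s hs
  rw [Real.norm_of_nonneg hs.1]
  exact hs.2

theorem ae_mul_nonneg (hx : IsFeasibleAllocation T x)
    (hv_nonneg : ∀ᵐ s ∂volume.restrict (Set.Icc 0 T), 0 ≤ v a s) :
    ∀ᵐ s ∂volume.restrict (Set.Icc 0 T), 0 ≤ v a s * x a s := by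
  filter_upwards [hv_nonneg, hx.ae_mem_Icc a] with s hvs hxs
  exact mul_nonneg hvs hxs.1

theorem integral_mul_le (hx : IsFeasibleAllocation T x) (hT : 0 ≤ T)
    (hv_nonneg : ∀ᵐ s ∂volume.restrict (Set.Icc 0 T), 0 ≤ v a s)
    (hv_int : IntegrableOn (v a) (Set.Icc 0 T)) :
    ∫ s in (0 : ℝ)..T, v a s * x a s ≤ ∫ s in (0 : ℝ)..T, v a s := by
  refine intervalIntegral.integral_mono_ae_restrict hT (hx.intervalIntegrable_mul hT hv_int)
    ((intervalIntegrable_iff_integrableOn_Icc_of_le hT).2 hv_int) ?_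
  filter_upwards [hv_nonneg, hx.ae_mem_Icc a] with s hvs hxs
  exact mul_le_of_le_one_right hvs hxs.2

end IsFeasibleAllocation

theorem le_baseUtility (hx : IsFeasibleAllocation T x)
    (hv_nonneg : ∀ᵐ s ∂volume.restrict (Set.Icc 0 T), 0 ≤ v a s) {t : ℝ} (ht : t ∈ Set.Icc 0 T) :
    c ≤ baseUtility c v x a t :=
  le_const_add_primitive c (hx.ae_mul_nonneg hv_nonneg) ht

theorem baseUtility_le (hx : IsFeasibleAllocation T x) (hT : 0 ≤ T)
    (hv_nonneg : ∀ᵐ s ∂volume.restrict (Set.Icc 0 T), 0 ≤ v a s)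
    (hv_int : IntegrableOn (v a) (Set.Icc 0 T)) :
    baseUtility c v x a T ≤ c + ∫ s in (0 : ℝ)..T, v a s :=
  add_le_add_right (hx.integral_mul_le hT hv_nonneg hv_int) c

theorem baseUtility_monotoneOn (hx : IsFeasibleAllocation T x) (hT : 0 ≤ T)
    (hv_nonneg : ∀ᵐ s ∂volume.restrict (Set.Icc 0 T), 0 ≤ v a s)
    (hv_int : IntegrableOn (v a) (Set.Icc 0 T)) :
    MonotoneOn (baseUtility c v x a) (Set.Icc 0 T) :=
  monotoneOn_const_add_primitive c (hx.intervalIntegrable_mul hT hv_int)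
    (hx.ae_mul_nonneg hv_nonneg)

namespace IsNashianGreedy

theorem ae_sum_div_le (hgreedy : IsNashianGreedy T c v x) (hT : 0 ≤ T) (hc : 0 < c)
    (hv_nonneg : ∀ a, ∀ᵐ s ∂volume.restrict (Set.Icc 0 T), 0 ≤ v a s)
    (hv_int : ∀ a, IntegrableOn (v a) (Set.Icc 0 T))
    (hx : IsFeasibleAllocation T x) (hy : IsFeasibleAllocation T y) :
    ∀ᵐ s ∂volume.restrict (Set.Icc 0 T),
      ∑ a, v a s * y a s / baseUtility c v x a T ≤
        ∑ a, v a s * x a s / baseUtility c v x a s := by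
  filter_upwards [ae_all_iff.2 hv_nonneg, hx.ae_shares, hy.ae_shares, hgreedy,
    ae_restrict_mem measurableSet_Icc] with s hvs hxs hys ⟨hsum, hmax⟩ hs
  have hUpos : ∀ a, 0 < baseUtility c v x a s := fun a =>
    hc.trans_le (le_baseUtility hx (hv_nonneg a) hs)
  calc ∑ a, v a s * y a s / baseUtility c v x a T
      ≤ ∑ a, v a s * y a s / baseUtility c v x a s := Finset.sum_le_sum fun a _ =>
        div_le_div_of_nonneg_left (mul_nonneg (hvs a) (hys.1 a)) (hUpos a)
          (baseUtility_monotoneOn hx hT (hv_nonneg a) (hv_int a) hs (Set.right_mem_Icc.2 hT) hs.2)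
    _ = ∑ a, v a s / baseUtility c v x a s * y a s := by simp_rw [mul_div_right_comm]
    _ ≤ ∑ a, v a s / baseUtility c v x a s * x a s :=
        sum_mul_le_sum_mul_of_support_subset_argmax (fun a => div_nonneg (hvs a) (hUpos a).le)
          hxs.1 hsum hys.1 hys.2
          fun a b hxa => (div_le_div_iff₀ (hUpos b) (hUpos a)).2 (hmax a b hxa)
    _ = ∑ a, v a s * x a s / baseUtility c v x a s := by simp_rw [mul_div_right_comm]

theorem sum_utility_div_le_sum_log (hgreedy : IsNashianGreedy T c v x) (hT : 0 ≤ T) (hc : 0 < c)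
    (hv_nonneg : ∀ a, ∀ᵐ s ∂volume.restrict (Set.Icc 0 T), 0 ≤ v a s)
    (hv_int : ∀ a, IntegrableOn (v a) (Set.Icc 0 T))
    (hx : IsFeasibleAllocation T x) (hy : IsFeasibleAllocation T y) :
    ∑ a, (∫ s in (0 : ℝ)..T, v a s * y a s) / baseUtility c v x a T ≤
      ∑ a, Real.log (baseUtility c v x a T / c) := by
  have hxint : ∀ a, IntervalIntegrable (fun s => v a s * x a s) volume 0 T := fun a =>
    hx.intervalIntegrable_mul hT (hv_int a)
  have hyint : ∀ a, IntervalIntegrable (fun s => v a s * y a s / baseUtility c v x a T)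
      volume 0 T := fun a => (hy.intervalIntegrable_mul hT (hv_int a)).div_const _
  have hrate : ∀ a, IntervalIntegrable (fun s => v a s * x a s / baseUtility c v x a s)
      volume 0 T := fun a =>
    intervalIntegrable_div_const_add_primitive hT hc (hxint a) (hx.ae_mul_nonneg (hv_nonneg a))
  calc ∑ a, (∫ s in (0 : ℝ)..T, v a s * y a s) / baseUtility c v x a T
      = ∫ s in (0 : ℝ)..T, ∑ a, v a s * y a s / baseUtility c v x a T := by
        rw [intervalIntegral.integral_finsetSum fun a _ => hyint a]
        simp_rw [intervalIntegral.integral_div]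
    _ ≤ ∫ s in (0 : ℝ)..T, ∑ a, v a s * x a s / baseUtility c v x a s :=
        intervalIntegral.integral_mono_ae_restrict hT
          (by simpa only [Finset.sum_fn] using
            IntervalIntegrable.sum Finset.univ fun a _ => hyint a)
          (by simpa only [Finset.sum_fn] using
            IntervalIntegrable.sum Finset.univ fun a _ => hrate a)
          (hgreedy.ae_sum_div_le hT hc hv_nonneg hv_int hx hy)
    _ = ∑ a, ∫ s in (0 : ℝ)..T, v a s * x a s / baseUtility c v x a s :=
        intervalIntegral.integral_finsetSum fun a _ => hrate a
    _ ≤ ∑ a, Real.log (baseUtility c v x a T / c) := Finset.sum_le_sum fun a _ =>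
        integral_div_const_add_primitive_le_log hT hc (hxint a) (hx.ae_mul_nonneg (hv_nonneg a))

end IsNashianGreedy

theorem stmt_4_general [Nonempty ι] {p : ℝ} (hT : 0 ≤ T) (hc : 0 < c) (hp0 : p ≠ 0) (hp1 : p ≤ 1)
    (hv_nonneg : ∀ a, ∀ᵐ s ∂volume.restrict (Set.Icc 0 T), 0 ≤ v a s)
    (hv_int : ∀ a, IntegrableOn (v a) (Set.Icc 0 T))
    (hv_le_one : ∀ a, ∫ s in (0 : ℝ)..T, v a s ≤ 1)
    (hx : IsFeasibleAllocation T x) (hgreedy : IsNashianGreedy T c v x)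
    (hy : IsFeasibleAllocation T y) (hypos : ∀ a, 0 < ∫ s in (0 : ℝ)..T, v a s * y a s) :
    powerMean p (fun a => ∫ s in (0 : ℝ)..T, v a s * y a s) /
        ((1 / c + 1) ^ |p| * Real.log (1 / c + 1)) ≤
      powerMean p fun a => baseUtility c v x a T := by
  have hlow : ∀ a, c ≤ baseUtility c v x a T := fun a =>
    le_baseUtility hx (hv_nonneg a) (Set.right_mem_Icc.2 hT)
  have hpos : ∀ a, 0 < baseUtility c v x a T := fun a => hc.trans_le (hlow a)
  have hhigh : ∀ a, baseUtility c v x a T ≤ (1 / c + 1) * c := fun a => by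
    rw [add_one_mul, one_div_mul_cancel hc.ne', add_comm]
    exact (baseUtility_le hx hT (hv_nonneg a) (hv_int a)).trans (add_le_add_right (hv_le_one a) c)
  have hratio : ∀ a b, baseUtility c v x a T ≤ (1 / c + 1) * baseUtility c v x b T := fun a b =>
    (hhigh a).trans (mul_le_mul_of_nonneg_left (hlow b) (by positivity))
  have hmean : 1 / (Fintype.card ι : ℝ) *
      ∑ a, (∫ s in (0 : ℝ)..T, v a s * y a s) / baseUtility c v x a T ≤ Real.log (1 / c + 1) := by
    rw [one_div_mul_eq_div, div_le_iff₀' (by positivity), ← nsmul_eq_mul]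
    refine (hgreedy.sum_utility_div_le_sum_log hT hc hv_nonneg hv_int hx hy).trans
      (Finset.sum_le_card_nsmul _ _ _ fun a _ => ?_)
    exact Real.log_le_log (div_pos (hpos a) hc) ((div_le_iff₀ hc).2 (hhigh a))
  have hnonneg : 0 ≤ powerMean p fun a => baseUtility c v x a T :=
    powerMean_nonneg fun a => (hpos a).le
  have hlog : 0 < Real.log (1 / c + 1) := Real.log_pos (lt_add_of_pos_left 1 (by positivity))
  rw [div_le_iff₀' (by positivity)]
  refine (powerMean_le_mul_powerMean hp0 hp1 hypos hpos fun a b =>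
    rpow_le_rpow_abs_mul_rpow p (hpos a) (hpos b) (hratio a b) (hratio b a)).trans ?_
  gcongr

end Allocation

section Constants

variable {t q : ℝ}

theorem one_div_log_le_one (ht : 3 ≤ t) : 1 / Real.log t ≤ 1 := by
  have hlog : 1 ≤ Real.log t :=
    (Real.le_log_iff_exp_le (by linarith)).2 (Real.exp_one_lt_three.le.trans ht)
  exact (div_le_one (by linarith)).2 hlog

theorem add_one_rpow_le_exp_two (ht : 2 ≤ t) (hq0 : 0 ≤ q) (hq : q ≤ 1 / Real.log t) :
    (t + 1) ^ q ≤ Real.exp 2 := by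
  have hlog : 0 < Real.log t := Real.log_pos (by linarith)
  have hlog_add_one : Real.log (t + 1) ≤ 2 * Real.log t := by
    calc Real.log (t + 1) ≤ Real.log (t ^ 2) := Real.log_le_log (by linarith) (by nlinarith)
      _ = 2 * Real.log t := by simp
  rw [rpow_def_of_pos (by linarith), Real.exp_le_exp]
  calc Real.log (t + 1) * q ≤ 2 * Real.log t * (1 / Real.log t) := by gcongr
    _ = 2 := by field_simp

end Constants

theorem stmt_4
    (n : ℕ) (hn : 3 ≤ n) (T : ℝ) (hT : 0 < T)
    (v : Fin n → ℝ → ℝ)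
    (hv_meas : ∀ a, Measurable (v a))
    (hv_nonneg : ∀ a, ∀ᵐ s ∂(volume.restrict (Set.Icc (0:ℝ) T)), 0 ≤ v a s)
    (hv_int : ∀ a, IntegrableOn (v a) (Set.Icc (0:ℝ) T))
    (hv_unit : ∀ a, ∫ s in (0:ℝ)..T, v a s = 1)
    (x : Fin n → ℝ → ℝ)
    (hx_meas : ∀ a, Measurable (x a))
    (hx_feas : ∀ᵐ s ∂(volume.restrict (Set.Icc (0:ℝ) T)),
      (∀ a, 0 ≤ x a s) ∧ ∑ a, x a s ≤ 1)
    (U : Fin n → ℝ → ℝ)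
    (hU : ∀ a t, U a t = 1 / (n : ℝ) + ∫ s in (0:ℝ)..t, v a s * x a s)
    (hgreedy : ∀ᵐ s ∂(volume.restrict (Set.Icc (0:ℝ) T)),
      (∑ a, x a s = 1) ∧
      ∀ a b, 0 < x a s → v a s * U b s ≥ v b s * U a s)
    (p : ℝ) (hp0 : p ≠ 0) (hp : |p| ≤ 1 / Real.log n)
    (xstar : Fin n → ℝ → ℝ)
    (hxstar_meas : ∀ a, Measurable (xstar a))
    (hxstar_feas : ∀ᵐ s ∂(volume.restrict (Set.Icc (0:ℝ) T)),
      (∀ a, 0 ≤ xstar a s) ∧ ∑ a, xstar a s ≤ 1)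
    (Ustar : Fin n → ℝ)
    (hUstar : ∀ a, Ustar a = ∫ s in (0:ℝ)..T, v a s * xstar a s)
    (hUstar_pos : ∀ a, 0 < Ustar a) :
    ((1 / (n : ℝ)) * ∑ a, (U a T) ^ p) ^ (1 / p) ≥
      ((1 / (n : ℝ)) * ∑ a, (Ustar a) ^ p) ^ (1 / p) /
        (2 * Real.exp 2 * Real.log ((n : ℝ) + 1)) := by
  obtain rfl : U = baseUtility (1 / (n : ℝ)) v x := funext₂ hU
  obtain rfl : Ustar = fun a => ∫ s in (0 : ℝ)..T, v a s * xstar a s := funext hUstar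
  have hn3 : (3 : ℝ) ≤ n := by exact_mod_cast hn
  have : NeZero n := ⟨by omega⟩
  have hlog : 0 < Real.log ((n : ℝ) + 1) := Real.log_pos (by linarith)
  have hfactor : ((n : ℝ) + 1) ^ |p| ≤ 2 * Real.exp 2 := by
    linarith [add_one_rpow_le_exp_two (by linarith) (abs_nonneg p) hp, Real.exp_pos 2]
  have hUstar_nonneg := powerMean_nonneg (p := p) fun a => (hUstar_pos a).le
  have hgeneral := stmt_4_general (c := 1 / n) hT.le (by positivity) hp0
    ((le_abs_self p).trans (hp.trans (one_div_log_le_one hn3))) hv_nonneg hv_int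
    (fun a => (hv_unit a).le) ⟨hx_meas, hx_feas⟩ hgreedy ⟨hxstar_meas, hxstar_feas⟩ hUstar_pos
  simp only [powerMean, Fintype.card_fin, one_div_one_div] at hgeneral hUstar_nonneg
  exact (div_le_div_of_nonneg_left hUstar_nonneg (by positivity) (by gcongr)).trans hgeneral
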